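/- For all vectors x, y, z in H, one has ‖z‖²·⟨x,y⟩ + ‖x‖·‖y‖·‖z‖·‖x + y + z‖ ≥ ‖x‖²·⟨y,z⟩ + ‖y‖²·⟨x,z⟩ + 2·⟨x,z⟩·⟨y,z⟩. -/

import Mathlib

open RealInnerProductSpace

section

variable {H : Type*} [NormedAddCommGroup H] [InnerProductSpace ℝ H]

/-- The Gram determinant of three vectors is nonnegative. -/
theorem gram_det_three_nonneg (x y z : H) :
    0 ≤ ‖x‖ ^ 2 * ‖y‖ ^ 2 * ‖z‖ ^ 2 + 2 * ⟪x, y⟫ * ⟪y, z⟫ * ⟪x, z⟫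
      - ‖x‖ ^ 2 * ⟪y, z⟫ ^ 2 - ‖y‖ ^ 2 * ⟪x, z⟫ ^ 2 - ‖z‖ ^ 2 * ⟪x, y⟫ ^ 2 := by
  have h := (Matrix.posSemidef_gram ℝ ![x, y, z]).det_nonneg
  simp only [Matrix.det_fin_three, Matrix.gram_apply, Matrix.cons_val,
    real_inner_self_eq_norm_sq, real_inner_comm x y, real_inner_comm x z,
    real_inner_comm y z] at h
  linarith

/-- The vector part of the Clifford product `x z y` has norm at most `‖x‖ * ‖y‖ * ‖z‖`. -/
theorem norm_clifford_vector_part_le (x y z : H) :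
    ‖⟪x, z⟫ • y - ⟪x, y⟫ • z + ⟪y, z⟫ • x‖ ≤ ‖x‖ * ‖y‖ * ‖z‖ := by
  refine le_of_sq_le_sq ?_ (by positivity)
  have h := gram_det_three_nonneg x y z
  rw [← real_inner_self_eq_norm_sq]
  simp only [inner_add_left, inner_add_right, inner_sub_left, inner_sub_right,
    norm_smul, mul_pow, Real.norm_eq_abs, sq_abs, real_inner_smul_left, real_inner_smul_right,
    real_inner_self_eq_norm_sq,
    real_inner_comm x y, real_inner_comm x z, real_inner_comm y z]
  linarith

end

theorem stmt3 {H : Type*} [NormedAddCommGroup H] [InnerProductSpace ℝ H] (x y z : H) :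
    ‖z‖ ^ 2 * ⟪x, y⟫ + ‖x‖ * ‖y‖ * ‖z‖ * ‖x + y + z‖ ≥
      ‖x‖ ^ 2 * ⟪y, z⟫ + ‖y‖ ^ 2 * ⟪x, z⟫ + 2 * ⟪x, z⟫ * ⟪y, z⟫ := by
  have h := (real_inner_le_norm (⟪x, z⟫ • y - ⟪x, y⟫ • z + ⟪y, z⟫ • x) (x + y + z)).trans
    (mul_le_mul_of_nonneg_right (norm_clifford_vector_part_le x y z) (norm_nonneg _))
  simp only [inner_add_left, inner_add_right, inner_sub_left,
    real_inner_smul_left, real_inner_self_eq_norm_sq,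
    real_inner_comm x y, real_inner_comm x z, real_inner_comm y z] at h
  linarith
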